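/- (Quadratic vanishing of the saddle value in the double-scaling regime: h_{cr}(s) = (2/(s_*³·(4/s_*² − 1)^{1/2}))·(s − s_*)²·(1 + O(s − s_*)).) Let s_* ∈ ℂ with Re s_* ≠ 0 and Im s_* ≠ 0. Then the function s ↦ (H(s) − H(s_*) + (s − s_*)·(4/s_*² − 1)^(1/2)) / (s − s_*)² tends to 2/(s_*³·(4/s_*² − 1)^(1/2)) as s → s_* with s ≠ s_*. -/

import Mathlib

/-!
Write `r(s) = (4/s² - 1)^(1/2)` and `u = 2/s + r`. Off the real and imaginary axes both principal
branches are holomorphic: `4/s² - 1` on the cut would make `s²` real, and since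
`u⁻¹ = 2/s - r`, `u` real would make `4/s = u + u⁻¹`, hence `s`, real. There `r' = -4/(s³ r)`, and
the contributions of the logarithm and of the product cancel to `H' = -r` (`hasDerivAt_Hfun`).
Thus `H` has first derivative `-r(s_*)` and second derivative `4/(s_*³ r(s_*))` at `s_*`, and
the claim is the second-order Taylor expansion of `H` at `s_*`, obtained from the mean value
inequality in `tendsto_second_order`.
-/

open Complex

/-- The saddle-point value `H(s) = h(2/s; s)` of the genus-zero modified external field. -/
noncomputable def Hfun (s : ℂ) : ℂ :=
  2 * Complex.log (2 / s + (4 / s ^ 2 - 1) ^ ((1 : ℂ) / 2))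
    - s * (4 / s ^ 2 - 1) ^ ((1 : ℂ) / 2)

/-- Peano form of the second-order Taylor expansion over `ℂ`: only differentiability near `a` and
differentiability of the derivative at `a` are needed. -/
lemma tendsto_second_order {f g : ℂ → ℂ} {a c : ℂ}
    (hf : ∀ᶠ s in nhds a, HasDerivAt f (g s) s) (hg : HasDerivAt g (2 * c) a) :
    Filter.Tendsto (fun s => (f s - f a - (s - a) * g a) / (s - a) ^ 2)
      (nhdsWithin a {a}ᶜ) (nhds c) := by
  rw [Metric.tendsto_nhdsWithin_nhds]
  intro ε hε
  have ho := (hasDerivAt_iff_isLittleO.1 hg).def (half_pos hε)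
  obtain ⟨δ, hδ, hball⟩ := Metric.eventually_nhds_iff.1 (hf.and ho)
  refine ⟨δ, hδ, ?_⟩
  intro s hs hsδ
  have hne : s - a ≠ 0 := sub_ne_zero.2 hs
  have hpos : 0 < ‖s - a‖ := norm_pos_iff.2 hne
  -- The remainder has derivative `o(t - a)`, so it is `o((s - a)²)` on the ball of radius `|s - a|`.
  have key := (convex_closedBall a ‖s - a‖).norm_image_sub_le_of_norm_hasDerivWithin_le
    (f := fun t => f t - f a - (t - a) * g a - c * (t - a) ^ 2)
    (f' := fun t => g t - g a - (t - a) * (2 * c))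
    (C := ε / 2 * ‖s - a‖) (x := a) (y := s) ?_ ?_ (by simp) (by simp [dist_eq_norm])
  · have e : (f s - f a - (s - a) * g a) / (s - a) ^ 2 - c
        = (f s - f a - (s - a) * g a - c * (s - a) ^ 2) / (s - a) ^ 2 := by
      field_simp
    rw [dist_eq_norm, e, norm_div, norm_pow, div_lt_iff₀ (by positivity)]
    simp only [sub_self, zero_mul, ne_eq, OfNat.ofNat_ne_zero, not_false_eq_true, zero_pow,
      mul_zero, sub_zero] at key
    nlinarith [mul_pos hpos hpos]
  · intro t ht
    have htδ : dist t a < δ := lt_of_le_of_lt ht (by simpa [dist_eq_norm] using hsδ)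
    have hid := (hasDerivAt_id t).sub_const a
    have h := (((hball htδ).1.sub_const (f a)).sub (hid.mul_const (g a))).sub
      ((hid.pow 2).const_mul c)
    refine (h.congr_deriv ?_).hasDerivWithinAt
    simp
    ring
  · intro t ht
    have ht' : ‖t - a‖ ≤ ‖s - a‖ := by simpa [dist_eq_norm] using ht
    have htδ : dist t a < δ := lt_of_le_of_lt ht (by simpa [dist_eq_norm] using hsδ)
    have h := (hball htδ).2
    simp only [smul_eq_mul] at h
    exact h.trans (by gcongr)

lemma sqrt_sq (z : ℂ) : (z ^ ((1 : ℂ) / 2)) ^ 2 = z := by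
  simp

lemma im_sq_ne_zero {s : ℂ} (hre : s.re ≠ 0) (him : s.im ≠ 0) : (s ^ 2).im ≠ 0 := by
  have e : (s ^ 2).im = 2 * (s.re * s.im) := by
    rw [pow_two, Complex.mul_im]
    ring
  rw [e]
  exact mul_ne_zero two_ne_zero (mul_ne_zero hre him)

lemma radicand_im_ne_zero {s : ℂ} (hre : s.re ≠ 0) (him : s.im ≠ 0) :
    (4 / s ^ 2 - 1).im ≠ 0 := by
  have h := im_sq_ne_zero hre him
  intro h0
  have hs : s ≠ 0 := by
    rintro rfl
    simp at hre
  apply h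
  have e : s ^ 2 = 4 / ((4 / s ^ 2 - 1) + 1) := by
    field_simp
    ring
  -- A complex number with vanishing imaginary part is the cast of its real part.
  have e2 : (4 / s ^ 2 - 1) = (((4 / s ^ 2 - 1).re : ℝ) : ℂ) := Complex.ext rfl (by simpa using h0)
  rw [e, e2]
  have e3 : (4 : ℂ) / (((4 / s ^ 2 - 1).re : ℝ) + 1)
      = ((4 / ((4 / s ^ 2 - 1).re + 1) : ℝ) : ℂ) := by push_cast; rfl
  rw [e3, Complex.ofReal_im]

lemma logArg_im_ne_zero {s : ℂ} (hre : s.re ≠ 0) (him : s.im ≠ 0) :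
    (2 / s + (4 / s ^ 2 - 1) ^ ((1 : ℂ) / 2)).im ≠ 0 := by
  have hs : s ≠ 0 := by
    rintro rfl
    simp at hre
  have hr := sqrt_sq (4 / s ^ 2 - 1)
  generalize (4 / s ^ 2 - 1) ^ ((1 : ℂ) / 2) = r at hr
  intro h0
  obtain ⟨x, hx⟩ : ∃ x : ℝ, 2 / s + r = (x : ℂ) := ⟨_, Complex.ext rfl (by simpa using h0)⟩
  have hprod : (2 / s + r) * (2 / s - r) = 1 := by
    have : (2 / s + r) * (2 / s - r) = 4 / s ^ 2 - r ^ 2 := by ring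
    rw [this, hr]
    ring
  have hinv : 2 / s - r = (x : ℂ)⁻¹ := by
    rw [← hx]
    exact eq_inv_of_mul_eq_one_right hprod
  have h4 : s = ((4 / (x + x⁻¹) : ℝ) : ℂ) := by
    push_cast
    rw [← hinv, ← hx]
    field_simp
    ring
  exact him (by rw [h4, Complex.ofReal_im])

lemma hasDerivAt_sqrt {s : ℂ} (hre : s.re ≠ 0) (him : s.im ≠ 0) :
    HasDerivAt (fun s : ℂ => (4 / s ^ 2 - 1) ^ ((1 : ℂ) / 2))
      (-4 / (s ^ 3 * (4 / s ^ 2 - 1) ^ ((1 : ℂ) / 2))) s := by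
  have hs : s ≠ 0 := by
    rintro rfl
    simp at hre
  have him' := radicand_im_ne_zero hre him
  have hne : 4 / s ^ 2 - 1 ≠ 0 := fun h => him' (by rw [h]; simp)
  have h1 : HasDerivAt (fun s : ℂ => 4 / s ^ 2 - 1) (-8 / s ^ 3) s := by
    have := ((hasDerivAt_const s (4 : ℂ)).div (hasDerivAt_pow 2 s) (pow_ne_zero 2 hs)).sub_const 1
    refine this.congr_deriv ?_
    field_simp
    push_cast
    ring
  refine (h1.cpow_const (c := (1 : ℂ) / 2) (Or.inr him')).congr_deriv ?_
  have hr := sqrt_sq (4 / s ^ 2 - 1)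
  rw [Complex.cpow_sub _ _ hne, Complex.cpow_one]
  generalize (4 / s ^ 2 - 1) ^ ((1 : ℂ) / 2) = r at hr ⊢
  have hr0 : r ≠ 0 := by
    rintro rfl
    exact hne (by rw [← hr]; simp)
  rw [← hr]
  field_simp
  ring

lemma hasDerivAt_Hfun {s : ℂ} (hre : s.re ≠ 0) (him : s.im ≠ 0) :
    HasDerivAt Hfun (-(4 / s ^ 2 - 1) ^ ((1 : ℂ) / 2)) s := by
  have hs : s ≠ 0 := by
    rintro rfl
    simp at hre
  have hr' := hasDerivAt_sqrt hre him
  have hu := logArg_im_ne_zero hre him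
  have h2 : HasDerivAt (fun s : ℂ => 2 / s) (-2 / s ^ 2) s := by
    refine ((hasDerivAt_const s (2 : ℂ)).div (hasDerivAt_id s) hs).congr_deriv ?_
    simp
  have h := (((h2.add hr').clog (Or.inr hu)).const_mul 2).sub ((hasDerivAt_id s).mul hr')
  refine HasDerivAt.congr_deriv (f := Hfun) h ?_
  have hne : 4 / s ^ 2 - 1 ≠ 0 := fun h => radicand_im_ne_zero hre him (by rw [h]; simp)
  have hr := sqrt_sq (4 / s ^ 2 - 1)
  simp only [Pi.add_apply, id]
  generalize (4 / s ^ 2 - 1) ^ ((1 : ℂ) / 2) = r at hr hu ⊢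
  have hr0 : r ≠ 0 := by
    rintro rfl
    exact hne (by rw [← hr]; simp)
  have hu0 : 2 / s + r ≠ 0 := fun h => hu (by rw [h]; simp)
  -- Since `r' = (2/s) (2/s)' / r`, the derivative of `u = 2/s + r` is `(2/s)' u / r`.
  have e : -2 / s ^ 2 + -4 / (s ^ 3 * r) = (2 / s + r) * (-2 / (s ^ 2 * r)) := by
    field_simp
    ring
  rw [e, mul_div_cancel_left₀ _ hu0]
  field_simp
  ring

theorem saddle_value_quadratic_vanishing (s_star : ℂ)
    (hre : s_star.re ≠ 0) (him : s_star.im ≠ 0) :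
    Filter.Tendsto
      (fun s : ℂ =>
        (Hfun s - Hfun s_star + (s - s_star) * (4 / s_star ^ 2 - 1) ^ ((1 : ℂ) / 2))
          / (s - s_star) ^ 2)
      (nhdsWithin s_star {s_star}ᶜ)
      (nhds (2 / (s_star ^ 3 * (4 / s_star ^ 2 - 1) ^ ((1 : ℂ) / 2)))) := by
  have hev : ∀ᶠ s in nhds s_star,
      HasDerivAt Hfun (-(4 / s ^ 2 - 1) ^ ((1 : ℂ) / 2)) s := by
    filter_upwards [Complex.continuous_re.continuousAt.eventually_ne hre,
      Complex.continuous_im.continuousAt.eventually_ne him] with s h1 h2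
    exact hasDerivAt_Hfun h1 h2
  have hg : HasDerivAt (fun s : ℂ => -(4 / s ^ 2 - 1) ^ ((1 : ℂ) / 2))
      (2 * (2 / (s_star ^ 3 * (4 / s_star ^ 2 - 1) ^ ((1 : ℂ) / 2)))) s_star :=
    (hasDerivAt_sqrt hre him).neg.congr_deriv (by ring)
  refine (tendsto_second_order hev hg).congr fun s => ?_
  ring
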